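/- arXiv:2406.10605 — 3 statements merged into one kernel-verified Lean document; each statement's English description precedes it below -/
import Mathlib

section
/- Consider OMWU with step size η > 0 in the 2-periodic matching-pennies game (encoded by sequences a, b as in the context). Let p ∈ (0, 1/4) with 16·√η ≤ p. If 1 − a(0) > 1/2 + 2p and 1 − b(0) > 1/2 + 2p, then for any values of a(−1), b(−1) ∈ (0,1) one has 1 − a(1) > 1/2 + p and 1 − b(1) > 1/2 + p. -/
/-- KL-divergence from the uniform strategy `(1/2, 1/2)` to `(x, 1-x)`. -/
noncomputable def KLhalf (x : ℝ) : ℝ :=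
  (1/2) * Real.log (1/(2*x)) + (1/2) * Real.log (1/(2*(1-x)))

/-- OMWU dynamics with step size `η` in the 2-periodic matching-pennies game:
`a t` is the probability player 1 assigns to its first strategy at time `t`,
`b t` that of player 2. -/
def OMWU (η : ℝ) (a b : ℤ → ℝ) : Prop :=
  (∀ t : ℤ, -1 ≤ t → (0 < a t ∧ a t < 1) ∧ (0 < b t ∧ b t < 1)) ∧
  (∀ t : ℤ, 0 ≤ t → Even t →
    (a (t+1) = a t * Real.exp (-(2*η)*(1 - b t) - η*(1 - b (t-1))) /
      (a t * Real.exp (-(2*η)*(1 - b t) - η*(1 - b (t-1)))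
        + (1 - a t) * Real.exp (-(2*η)*(b t) - η*(b (t-1)))) ∧
    b (t+1) = b t * Real.exp ((2*η)*(1 - a t) + η*(1 - a (t-1))) /
      (b t * Real.exp ((2*η)*(1 - a t) + η*(1 - a (t-1)))
        + (1 - b t) * Real.exp ((2*η)*(a t) + η*(a (t-1)))))) ∧
  (∀ t : ℤ, 0 ≤ t → Odd t →
    (a (t+1) = a t * Real.exp ((2*η)*(1 - b t) + η*(1 - b (t-1))) /
      (a t * Real.exp ((2*η)*(1 - b t) + η*(1 - b (t-1)))
        + (1 - a t) * Real.exp ((2*η)*(b t) + η*(b (t-1)))) ∧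
    b (t+1) = b t * Real.exp (-(2*η)*(1 - a t) - η*(1 - a (t-1))) /
      (b t * Real.exp (-(2*η)*(1 - a t) - η*(1 - a (t-1)))
        + (1 - b t) * Real.exp (-(2*η)*(a t) - η*(a (t-1))))))

/-!
The multiplicative weights update is a translation of the log-odds: it sends `sigmoid z` to
`sigmoid (z + (u - v))`, where `u - v` is the difference of the two exponents. As `sigmoid` is
`1/4`-Lipschitz and an optimistic exponent difference `±η (2 (1 - 2y) + (1 - 2y'))` is at most
`3η` in absolute value, no probability moves by more than `3η/4` in one step, whereas
`16 √η ≤ p < 1` forces `η ≤ p`.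
-/

open Real Set

lemma le_of_sqrt_le {x y : ℝ} (hy : y ≤ 1) (hxy : √x ≤ y) : x ≤ y := by
  have hy0 : 0 ≤ y := (sqrt_nonneg x).trans hxy
  calc x ≤ y ^ 2 := (sqrt_le_left hy0).1 hxy
    _ ≤ y := pow_le_of_le_one hy0 hy two_ne_zero

/-- The probability of the first strategy after one multiplicative weights update: the weights `x`
and `1 - x` are multiplied by `exp u` and `exp v` and then normalized. -/
noncomputable def mwUpdate (x u v : ℝ) : ℝ :=
  x * exp u / (x * exp u + (1 - x) * exp v)

lemma mwUpdate_sigmoid (z u v : ℝ) : mwUpdate (sigmoid z) u v = sigmoid (z + (u - v)) := by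
  have hexp : exp (-(z + (u - v))) = exp (-z) * exp v / exp u := by
    rw [← exp_add, ← exp_sub]
    ring_nf
  rw [mwUpdate, ← sigmoid_neg, ← sigmoid_mul_rexp_neg, sigmoid_def (z + _), hexp]
  have hz := sigmoid_pos z
  field

lemma lipschitzWith_sigmoid : LipschitzWith (1 / 4) sigmoid := by
  refine lipschitzWith_of_nnnorm_deriv_le differentiable_sigmoid fun z ↦ ?_
  have hderiv : 0 ≤ sigmoid z * (1 - sigmoid z) :=
    mul_nonneg (sigmoid_nonneg z) (sub_nonneg.2 (sigmoid_le_one z))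
  rw [← NNReal.coe_le_coe, coe_nnnorm, deriv_sigmoid, norm_of_nonneg hderiv]
  push_cast
  linarith [sq_nonneg (sigmoid z - 1 / 2)]

lemma abs_mwUpdate_sub_le {x : ℝ} (hx : x ∈ Ioo 0 1) (u v : ℝ) :
    |mwUpdate x u v - x| ≤ 1 / 4 * |u - v| := by
  obtain ⟨z, rfl⟩ := range_sigmoid ▸ hx
  rw [mwUpdate_sigmoid]
  simpa [dist_eq] using lipschitzWith_sigmoid.dist_le_mul (z + (u - v)) z

lemma abs_mwUpdate_sub_le_of_optimistic {x y y' u v c : ℝ} (hx : x ∈ Ioo 0 1)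
    (hy : y ∈ Icc 0 1) (hy' : y' ∈ Icc 0 1) (huv : u - v = c * (2 * (1 - 2 * y) + (1 - 2 * y'))) :
    |mwUpdate x u v - x| ≤ 3 / 4 * |c| := by
  have hpayoff : |2 * (1 - 2 * y) + (1 - 2 * y')| ≤ 3 :=
    abs_le.2 ⟨by linarith [hy.2, hy'.2], by linarith [hy.1, hy'.1]⟩
  calc |mwUpdate x u v - x| ≤ 1 / 4 * |u - v| := abs_mwUpdate_sub_le hx u v
    _ = 1 / 4 * (|c| * |2 * (1 - 2 * y) + (1 - 2 * y')|) := by rw [huv, abs_mul]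
    _ ≤ 1 / 4 * (|c| * 3) := by gcongr
    _ = 3 / 4 * |c| := by ring

namespace OMWU

variable {η : ℝ} {a b : ℤ → ℝ} {t : ℤ}

lemma abs_succ_sub_le (h : OMWU η a b) (ht : 0 ≤ t) :
    |a (t + 1) - a t| ≤ 3 / 4 * |η| ∧ |b (t + 1) - b t| ≤ 3 / 4 * |η| := by
  have mem_Ioo (s : ℤ) (hs : -1 ≤ s) : a s ∈ Ioo 0 1 ∧ b s ∈ Ioo 0 1 := h.1 s hs
  have mem_Icc (s : ℤ) (hs : -1 ≤ s) : a s ∈ Icc 0 1 ∧ b s ∈ Icc 0 1 :=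
    (mem_Ioo s hs).imp (Ioo_subset_Icc_self ·) (Ioo_subset_Icc_self ·)
  obtain ⟨ha, hb⟩ := mem_Ioo t (by lia)
  obtain ⟨ha_cur, hb_cur⟩ := mem_Icc t (by lia)
  obtain ⟨ha_prev, hb_prev⟩ := mem_Icc (t - 1) (by lia)
  rcases t.even_or_odd with heven | hodd
  · obtain ⟨ha_succ, hb_succ⟩ := h.2.1 t ht heven
    rw [ha_succ, hb_succ]
    constructor
    · rw [← abs_neg η]
      exact abs_mwUpdate_sub_le_of_optimistic ha hb_cur hb_prev (by ring)
    · exact abs_mwUpdate_sub_le_of_optimistic hb ha_cur ha_prev (by ring)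
  · obtain ⟨ha_succ, hb_succ⟩ := h.2.2 t ht hodd
    rw [ha_succ, hb_succ]
    constructor
    · exact abs_mwUpdate_sub_le_of_optimistic ha hb_cur hb_prev (by ring)
    · rw [← abs_neg η]
      exact abs_mwUpdate_sub_le_of_optimistic hb ha_cur ha_prev (by ring)

end OMWU

theorem omwu_first_step_bound_general {η : ℝ} {a b : ℤ → ℝ} (h : OMWU η a b) {t : ℤ} (ht : 0 ≤ t)
    {p : ℝ} (hpη : 3 / 4 * |η| ≤ p) (ha : 1 - a t > 1 / 2 + 2 * p) (hb : 1 - b t > 1 / 2 + 2 * p) :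
    1 - a (t + 1) > 1 / 2 + p ∧ 1 - b (t + 1) > 1 / 2 + p := by
  obtain ⟨ha_move, hb_move⟩ := h.abs_succ_sub_le ht
  constructor
  · linarith [le_of_abs_le ha_move]
  · linarith [le_of_abs_le hb_move]

/-- If `1 − a 0 > 1/2 + 2p` and `1 − b 0 > 1/2 + 2p` with `p ∈ (0,1/4)` and
`16·√η ≤ p`, then `1 − a 1 > 1/2 + p` and `1 − b 1 > 1/2 + p`. -/
theorem omwu_first_step_bound
    (η : ℝ) (hη : 0 < η) (a b : ℤ → ℝ) (h : OMWU η a b)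
    (p : ℝ) (hp : 0 < p) (hp4 : p < 1/4) (hpη : 16 * Real.sqrt η ≤ p)
    (ha0 : 1 - a 0 > 1/2 + 2*p) (hb0 : 1 - b 0 > 1/2 + 2*p) :
    1 - a 1 > 1/2 + p ∧ 1 - b 1 > 1/2 + p := by
  have hηp : η ≤ p := le_of_sqrt_le (by linarith) (by linarith [sqrt_nonneg η])
  exact omwu_first_step_bound_general h le_rfl (by linarith [abs_of_pos hη]) ha0 hb0
end

section
/- Consider OMWU with step size η > 0 in the 2-periodic matching-pennies game (encoded by sequences a, b as in the context). Let p ∈ (0, 1/4) with 16·√η ≤ p, and assume 1 − a(0) ≥ 1/2 + 2p and 1 − b(0) ≥ 1/2 + 2p. Let t be an even integer with t ≥ 4, and assume that for every k with −1 ≤ k < t one has 1 − a(k) ≤ 1 − √η and 1 − b(k) ≤ 1 − √η. Writing A(s) = 1 − a(s) and B(s) = 1 − b(s), the following hold: (1) (3/4)·p·η³ ≤ B(t+1) − B(t−1) ≤ 12η²; (2) (3/2)·p·η^{3/2} ≤ B(t) − B(t+1) ≤ 3η; (3) (3/4)·p·η³ ≤ A(t+2) − A(t) ≤ 12η²; (4)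 (3/4)·p·η³ ≤ A(t+1) − A(t−1); (5) (3/4)·p·η³ ≤ B(t+2) − B(t); (6) (3/2)·p·η^{3/2} ≤ A(t+1) − A(t+2) ≤ 3η. -/
/-!
In terms of `A = 1 - a` and `B = 1 - b`, a round multiplies the odds of each player by `exp` of
plus or minus the opponent's optimistic payoff, the signs alternating with the parity of the
round. A single round therefore moves a strategy by `O(η)`, but over two rounds the first-order
terms cancel. What survives in the exponent of `A` is `2η` times a signed one-step increment of
`B`, up to the two-step increment of `B`, which is one order smaller. As long as `A` stays above
`1/2` that one-step increment has a definite sign, so the exponent is nonnegative and `A` does not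
decrease over two rounds; hence `A` stays above `1/2` forever, and likewise `B`. The lower bounds
follow because a change of exponent `d` changes a probability `x` by about `x (1 - x) d`, and
`x (1 - x)` is of order at least `√η` as long as `x` lies between `1/2` and about `1 - √η`.
-/

lemma le_mul_sqrt {r c : ℝ} (hr : 0 ≤ r) (hc : √r ≤ c) : r ≤ c * √r := by
  nth_rw 1 [← Real.mul_self_sqrt hr]
  gcongr

lemma rpow_three_halves {r : ℝ} (hr : 0 ≤ r) : r ^ ((3 : ℝ) / 2) = r * √r := by
  rw [Real.sqrt_eq_rpow, ← Real.rpow_one_add' hr (by norm_num)]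
  norm_num

/-- The exponential tilt of a Bernoulli parameter: the probability `x` after its odds
`x / (1 - x)` have been multiplied by `exp d`. It describes one multiplicative weights update and,
unlike log-odds, needs no logarithm. -/
noncomputable def bernoulliTilt (x d : ℝ) : ℝ :=
  x * Real.exp d / (1 - x + x * Real.exp d)

section BernoulliTilt

variable {x : ℝ}

lemma bernoulliTilt_denom_pos (hx : x ∈ Set.Icc 0 1) (d : ℝ) : 0 < 1 - x + x * Real.exp d := by
  rcases hx.1.eq_or_lt with rfl | hx0
  · simp
  · linarith [hx.2, mul_pos hx0 (Real.exp_pos d)]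

@[simp]
lemma bernoulliTilt_zero (x : ℝ) : bernoulliTilt x 0 = x := by
  simp [bernoulliTilt]

lemma bernoulliTilt_bernoulliTilt (hx : x ∈ Set.Icc 0 1) (d e : ℝ) :
    bernoulliTilt (bernoulliTilt x d) e = bernoulliTilt x (d + e) := by
  have hd := (bernoulliTilt_denom_pos hx d).ne'
  have hde := (bernoulliTilt_denom_pos hx (d + e)).ne'
  unfold bernoulliTilt
  rw [Real.exp_add] at hde ⊢
  have hdenom : 1 - x * Real.exp d / (1 - x + x * Real.exp d) +
      x * Real.exp d / (1 - x + x * Real.exp d) * Real.exp e =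
        (1 - x + x * (Real.exp d * Real.exp e)) / (1 - x + x * Real.exp d) := by
    field_simp
    ring
  rw [hdenom]
  field_simp

lemma one_sub_div_eq_bernoulliTilt (hx : x ∈ Set.Icc 0 1) (u v : ℝ) :
    1 - x * Real.exp u / (x * Real.exp u + (1 - x) * Real.exp v) =
      bernoulliTilt (1 - x) (v - u) := by
  have hdenom : x * Real.exp u + (1 - x) * Real.exp v =
      Real.exp u * (1 - (1 - x) + (1 - x) * Real.exp (v - u)) := by
    rw [Real.exp_sub]
    field_simp
    ring
  have hpos := bernoulliTilt_denom_pos (x := 1 - x) ⟨by linarith [hx.2], by linarith [hx.1]⟩ (v - u)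
  rw [hdenom, bernoulliTilt]
  field_simp
  ring

lemma bernoulliTilt_sub_self (hx : x ∈ Set.Icc 0 1) (d : ℝ) :
    bernoulliTilt x d - x =
      x * (1 - x) * (Real.exp d - 1) / (1 - x + x * Real.exp d) := by
  have := (bernoulliTilt_denom_pos hx d).ne'
  unfold bernoulliTilt
  field_simp
  ring

lemma bernoulliTilt_sub_self_le (hx : x ∈ Set.Icc 0 1) (d : ℝ) :
    bernoulliTilt x d - x ≤ x * (1 - x) * (Real.exp d - 1) := by
  have hvar : 0 ≤ x * (1 - x) := mul_nonneg hx.1 (sub_nonneg.2 hx.2)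
  rw [bernoulliTilt_sub_self hx, div_le_iff₀ (bernoulliTilt_denom_pos hx d)]
  linarith [mul_nonneg hvar (mul_nonneg hx.1 (sq_nonneg (Real.exp d - 1)))]

lemma le_bernoulliTilt_sub_self (hx : x ∈ Set.Icc 0 1) (d : ℝ) :
    x * (1 - x) * (1 - Real.exp (-d)) ≤ bernoulliTilt x d - x := by
  have hvar : 0 ≤ x * (1 - x) := mul_nonneg hx.1 (sub_nonneg.2 hx.2)
  have hexp : 1 - Real.exp (-d) = (Real.exp d - 1) / Real.exp d := by
    rw [Real.exp_neg]
    field_simp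
  rw [bernoulliTilt_sub_self hx, hexp, ← mul_div_assoc,
    div_le_div_iff₀ (Real.exp_pos d) (bernoulliTilt_denom_pos hx d)]
  linarith [mul_nonneg hvar (mul_nonneg (sub_nonneg.2 hx.2) (sq_nonneg (Real.exp d - 1)))]

lemma abs_bernoulliTilt_sub_self_le (hx : x ∈ Set.Icc 0 1) {d : ℝ} (hd : |d| ≤ 1) :
    |bernoulliTilt x d - x| ≤ 2 * (x * (1 - x)) * |d| := by
  have hvar : 0 ≤ x * (1 - x) := mul_nonneg hx.1 (sub_nonneg.2 hx.2)
  have hexp : Real.exp d - 1 ≤ 2 * |d| := (abs_le.1 (Real.abs_exp_sub_one_le hd)).2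
  have hexp_neg : Real.exp (-d) - 1 ≤ 2 * |d| := by
    simpa using (abs_le.1 (Real.abs_exp_sub_one_le (x := -d) (by simpa using hd))).2
  rw [abs_le]
  constructor
  · linarith [le_bernoulliTilt_sub_self hx d, mul_le_mul_of_nonneg_left hexp_neg hvar]
  · linarith [bernoulliTilt_sub_self_le hx d, mul_le_mul_of_nonneg_left hexp hvar]

lemma le_sign_mul_bernoulliTilt_sub_self (hx : x ∈ Set.Icc 0 1) {ε d : ℝ}
    (hε : ε = 1 ∨ ε = -1) (hd0 : 0 ≤ d) (hd : d ≤ 1 / 4) :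
    3 / 4 * (x * (1 - x)) * d ≤ ε * (bernoulliTilt x (ε * d) - x) := by
  have hvar : 0 ≤ x * (1 - x) := mul_nonneg hx.1 (sub_nonneg.2 hx.2)
  have hexp : 3 / 4 * d ≤ 1 - Real.exp (-d) := by
    have habs : |-d| ≤ 1 := by rw [abs_neg, abs_of_nonneg hd0]; linarith
    have htaylor := (abs_le.1 (Real.abs_exp_sub_one_sub_id_le habs)).2
    linarith [mul_le_mul_of_nonneg_right hd hd0]
  have hmul := mul_le_mul_of_nonneg_left hexp hvar
  rcases hε with rfl | rfl
  · rw [one_mul, one_mul]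
    linarith [le_bernoulliTilt_sub_self hx d]
  · rw [neg_one_mul, neg_one_mul]
    linarith [bernoulliTilt_sub_self_le hx (-d)]

end BernoulliTilt

/-- The optimistic payoff advantage that a player offers the opponent in round `s`: twice the
current advantage `η (2 z s - 1)` plus the previous one. -/
def optimisticGain (η : ℝ) (z : ℤ → ℝ) (s : ℤ) : ℝ :=
  2 * η * (2 * z s - 1) + η * (2 * z (s - 1) - 1)

section OptimisticGain

variable {η : ℝ} {z : ℤ → ℝ} {s : ℤ}

lemma abs_optimisticGain_le (hη : 0 ≤ η) (hz : z s ∈ Set.Icc 0 1)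
    (hz_prev : z (s - 1) ∈ Set.Icc 0 1) : |optimisticGain η z s| ≤ 3 * η := by
  obtain ⟨hz0, hz1⟩ := hz
  obtain ⟨hz0', hz1'⟩ := hz_prev
  rw [abs_le, optimisticGain]
  constructor <;> nlinarith

lemma le_optimisticGain {m : ℝ} (hη : 0 ≤ η) (hz : 1 / 2 + m ≤ z s)
    (hz_prev : 1 / 2 + m ≤ z (s - 1)) : 6 * m * η ≤ optimisticGain η z s := by
  rw [optimisticGain]
  nlinarith

lemma optimisticGain_sub_succ (η : ℝ) (z : ℤ → ℝ) (s : ℤ) :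
    optimisticGain η z s - optimisticGain η z (s + 1) =
      2 * η * ((z s - z (s + 1)) + (z (s - 1) - z (s + 1))) := by
  simp only [optimisticGain, add_sub_cancel_right]
  ring

end OptimisticGain

/-- The OMWU dynamics of a zero-sum game whose payoff matrix changes sign every round, written for
the probabilities `x s`, `y s` of one strategy of each player; `ε s` is the sign of round `s` for
the first player. The sign is kept abstract so that exchanging the players, which flips it, stays
within the notion. -/
structure AlternatingOMWU (η : ℝ) (ε x y : ℤ → ℝ) : Prop where
  fst_mem : ∀ s, -1 ≤ s → x s ∈ Set.Icc 0 1
  snd_mem : ∀ s, -1 ≤ s → y s ∈ Set.Icc 0 1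
  sign : ∀ s, ε s = 1 ∨ ε s = -1
  sign_succ : ∀ s, ε (s + 1) = -ε s
  fst_succ : ∀ s, 0 ≤ s → x (s + 1) = bernoulliTilt (x s) (ε s * optimisticGain η y s)
  snd_succ : ∀ s, 0 ≤ s → y (s + 1) = bernoulliTilt (y s) (-ε s * optimisticGain η x s)

/-- The exponent by which rounds `s` and `s + 1` together tilt the strategy of the player whose
opponent plays `z`; the minus sign is the change of sign between the two rounds. -/
def twoStepGain (η : ℝ) (ε z : ℤ → ℝ) (s : ℤ) : ℝ :=
  ε s * (optimisticGain η z s - optimisticGain η z (s + 1))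

namespace AlternatingOMWU

variable {η m : ℝ} {ε x y : ℤ → ℝ} {s : ℤ}

lemma swap (h : AlternatingOMWU η ε x y) : AlternatingOMWU η (-ε) y x where
  fst_mem := h.snd_mem
  snd_mem := h.fst_mem
  sign s := by simpa [neg_eq_iff_eq_neg, or_comm] using h.sign s
  sign_succ s := by simp [h.sign_succ s]
  fst_succ := h.snd_succ
  snd_succ s hs := by simpa using h.fst_succ s hs

lemma abs_sign (h : AlternatingOMWU η ε x y) (s : ℤ) : |ε s| = 1 := by
  rcases h.sign s with hs | hs <;> simp [hs]

lemma fst_var_nonneg (h : AlternatingOMWU η ε x y) (hs : -1 ≤ s) : 0 ≤ x s * (1 - x s) :=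
  mul_nonneg (h.fst_mem s hs).1 (sub_nonneg.2 (h.fst_mem s hs).2)

lemma abs_optimisticGain_fst_le (h : AlternatingOMWU η ε x y) (hη : 0 ≤ η) (hs : 0 ≤ s) :
    |optimisticGain η x s| ≤ 3 * η :=
  abs_optimisticGain_le hη (h.fst_mem s (by lia)) (h.fst_mem (s - 1) (by lia))

lemma abs_fst_succ_sub_le (h : AlternatingOMWU η ε x y) (hη : 0 ≤ η) (hη' : η ≤ 1 / 12)
    (hs : 0 ≤ s) : |x (s + 1) - x s| ≤ 3 / 2 * η := by
  have hgain : |ε s * optimisticGain η y s| ≤ 3 * η := by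
    rw [abs_mul, h.abs_sign, one_mul]
    exact h.swap.abs_optimisticGain_fst_le hη hs
  have hvar : 2 * (x s * (1 - x s)) ≤ 1 / 2 := by linarith [sq_nonneg (x s - 1 / 2)]
  calc |x (s + 1) - x s|
      ≤ 2 * (x s * (1 - x s)) * |ε s * optimisticGain η y s| := by
        rw [h.fst_succ s hs]
        exact abs_bernoulliTilt_sub_self_le (h.fst_mem s (by lia)) (by linarith)
    _ ≤ 1 / 2 * (3 * η) := by gcongr
    _ = 3 / 2 * η := by ring

lemma abs_fst_add_sub_le (h : AlternatingOMWU η ε x y) (hη : 0 ≤ η) (hη' : η ≤ 1 / 12)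
    (hs : 0 ≤ s) (n : ℕ) : |x (s + n) - x s| ≤ n * (3 / 2 * η) := by
  induction n with
  | zero => simp
  | succ n ih =>
    have hstep := h.abs_fst_succ_sub_le hη hη' (s := s + n) (by lia)
    have htri := abs_sub_le (x (s + n + 1)) (x (s + n)) (x s)
    push_cast
    rw [← add_assoc]
    linarith

lemma fst_add_two (h : AlternatingOMWU η ε x y) (hs : 0 ≤ s) :
    x (s + 2) = bernoulliTilt (x s) (twoStepGain η ε y s) := by
  rw [show s + 2 = s + 1 + 1 by ring, h.fst_succ (s + 1) (by lia), h.fst_succ s hs,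
    bernoulliTilt_bernoulliTilt (h.fst_mem s (by lia)), h.sign_succ, twoStepGain]
  ring_nf

lemma fst_eq_bernoulliTilt_add_two (h : AlternatingOMWU η ε x y) (hs : 0 ≤ s) :
    x s = bernoulliTilt (x (s + 2)) (-twoStepGain η ε y s) := by
  rw [h.fst_add_two hs, bernoulliTilt_bernoulliTilt (h.fst_mem s (by lia)), add_neg_cancel,
    bernoulliTilt_zero]

lemma snd_eq_bernoulliTilt_succ (h : AlternatingOMWU η ε x y) (hs : 0 ≤ s) :
    y s = bernoulliTilt (y (s + 1)) (ε s * optimisticGain η x s) := by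
  rw [h.snd_succ s hs, bernoulliTilt_bernoulliTilt (h.snd_mem s (by lia)), neg_mul,
    neg_add_cancel, bernoulliTilt_zero]

lemma abs_twoStepGain_le (h : AlternatingOMWU η ε x y) (hη : 0 ≤ η) (hη' : η ≤ 1 / 12)
    (hs : 1 ≤ s) : |twoStepGain η ε y s| ≤ 9 * η ^ 2 := by
  have hstep := abs_le.1 (h.swap.abs_fst_succ_sub_le hη hη' (s := s) (by lia))
  have hstep_prev := abs_le.1 (h.swap.abs_fst_succ_sub_le hη hη' (s := s - 1) (by lia))
  rw [sub_add_cancel] at hstep_prev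
  have hsum : |(y s - y (s + 1)) + (y (s - 1) - y (s + 1))| ≤ 9 / 2 * η := by
    rw [abs_le]
    constructor <;> linarith
  calc |twoStepGain η ε y s|
      = 2 * η * |(y s - y (s + 1)) + (y (s - 1) - y (s + 1))| := by
        rw [twoStepGain, optimisticGain_sub_succ, abs_mul, h.abs_sign, one_mul, abs_mul,
          abs_of_nonneg (by positivity : 0 ≤ 2 * η)]
    _ ≤ 2 * η * (9 / 2 * η) := by gcongr
    _ = 9 * η ^ 2 := by ring

lemma abs_fst_sub_add_two_le (h : AlternatingOMWU η ε x y) (hη : 0 ≤ η) (hη' : η ≤ 1 / 12)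
    (hs : 1 ≤ s) : |x s - x (s + 2)| ≤ 18 * η ^ 2 * (x (s + 2) * (1 - x (s + 2))) := by
  have hgain := h.abs_twoStepGain_le hη hη' hs
  have hvar : 0 ≤ x (s + 2) * (1 - x (s + 2)) := h.fst_var_nonneg (by lia)
  calc |x s - x (s + 2)|
      ≤ 2 * (x (s + 2) * (1 - x (s + 2))) * |-twoStepGain η ε y s| := by
        nth_rw 1 [h.fst_eq_bernoulliTilt_add_two (s := s) (by lia)]
        refine abs_bernoulliTilt_sub_self_le (h.fst_mem _ (by lia)) ?_
        rw [abs_neg]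
        nlinarith
    _ ≤ 2 * (x (s + 2) * (1 - x (s + 2))) * (9 * η ^ 2) := by
        rw [abs_neg]
        gcongr
    _ = 18 * η ^ 2 * (x (s + 2) * (1 - x (s + 2))) := by ring

lemma le_sign_mul_snd_sub_succ (h : AlternatingOMWU η ε x y) (hη : 0 ≤ η) (hη' : η ≤ 1 / 12)
    (hm : 0 ≤ m) (hs : 0 ≤ s) (hx : 1 / 2 + m ≤ x s) (hx_prev : 1 / 2 + m ≤ x (s - 1)) :
    9 / 2 * m * η * (y (s + 1) * (1 - y (s + 1))) ≤ ε s * (y s - y (s + 1)) := by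
  have hgain := le_optimisticGain hη hx hx_prev
  have hgain' : optimisticGain η x s ≤ 3 * η :=
    (abs_le.1 (h.abs_optimisticGain_fst_le hη hs)).2
  have hvar : 0 ≤ y (s + 1) * (1 - y (s + 1)) := h.swap.fst_var_nonneg (by lia)
  calc 9 / 2 * m * η * (y (s + 1) * (1 - y (s + 1)))
      = 3 / 4 * (y (s + 1) * (1 - y (s + 1))) * (6 * m * η) := by ring
    _ ≤ 3 / 4 * (y (s + 1) * (1 - y (s + 1))) * optimisticGain η x s := by gcongr
    _ ≤ ε s * (bernoulliTilt (y (s + 1)) (ε s * optimisticGain η x s) - y (s + 1)) :=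
        le_sign_mul_bernoulliTilt_sub_self (h.snd_mem _ (by lia)) (h.sign s)
          (le_trans (by positivity) hgain) (by linarith)
    _ = ε s * (y s - y (s + 1)) := by rw [← h.snd_eq_bernoulliTilt_succ hs]

lemma le_twoStepGain (h : AlternatingOMWU η ε x y) (hη : 0 ≤ η) (hη' : η ≤ 1 / 12)
    (hm : 36 * η ≤ m) (hs : 2 ≤ s) (hx : 1 / 2 + m ≤ x s) (hx_prev : 1 / 2 + m ≤ x (s - 1)) :
    8 * m * η ^ 2 * (y (s + 1) * (1 - y (s + 1))) ≤ twoStepGain η ε y s := by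
  set v := y (s + 1) * (1 - y (s + 1)) with hv_def
  have hv : 0 ≤ v := h.swap.fst_var_nonneg (by lia)
  have hfirst : 9 / 2 * m * η * v ≤ ε s * (y s - y (s + 1)) :=
    h.le_sign_mul_snd_sub_succ hη hη' (by linarith) (by lia) hx hx_prev
  have hsecond : -(18 * η ^ 2 * v) ≤ ε s * (y (s - 1) - y (s + 1)) := by
    have hstep := h.swap.abs_fst_sub_add_two_le hη hη' (s := s - 1) (by lia)
    rw [show s - 1 + 2 = s + 1 by ring, ← hv_def] at hstep
    refine (abs_le.1 ?_).1
    rwa [abs_mul, h.abs_sign, one_mul]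
  have hsmall : 36 * η * (η ^ 2 * v) ≤ m * (η ^ 2 * v) := by gcongr
  calc 8 * m * η ^ 2 * v
      ≤ 2 * η * (9 / 2 * m * η * v + -(18 * η ^ 2 * v)) := by linarith
    _ ≤ 2 * η * (ε s * (y s - y (s + 1)) + ε s * (y (s - 1) - y (s + 1))) := by gcongr
    _ = twoStepGain η ε y s := by
        rw [twoStepGain, optimisticGain_sub_succ]
        ring

lemma le_fst_add_two_sub (h : AlternatingOMWU η ε x y) (hη : 0 ≤ η) (hη' : η ≤ 1 / 12)
    (hm : 36 * η ≤ m) (hs : 2 ≤ s) (hx : 1 / 2 + m ≤ x s) (hx_prev : 1 / 2 + m ≤ x (s - 1)) :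
    6 * m * η ^ 2 * (x s * (1 - x s)) * (y (s + 1) * (1 - y (s + 1))) ≤ x (s + 2) - x s := by
  have hm0 : 0 ≤ m := by linarith
  have hvx : 0 ≤ x s * (1 - x s) := h.fst_var_nonneg (by lia)
  have hvy : 0 ≤ y (s + 1) * (1 - y (s + 1)) := h.swap.fst_var_nonneg (by lia)
  have hgain := h.le_twoStepGain hη hη' hm hs hx hx_prev
  have hgain' := (abs_le.1 (h.abs_twoStepGain_le hη hη' (s := s) (by lia))).2
  have htilt := le_sign_mul_bernoulliTilt_sub_self (h.fst_mem s (by lia)) (Or.inl rfl)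
    (le_trans (by positivity) hgain) (by nlinarith)
  rw [one_mul, one_mul, ← h.fst_add_two (by lia)] at htilt
  calc 6 * m * η ^ 2 * (x s * (1 - x s)) * (y (s + 1) * (1 - y (s + 1)))
      = 3 / 4 * (x s * (1 - x s)) * (8 * m * η ^ 2 * (y (s + 1) * (1 - y (s + 1)))) := by ring
    _ ≤ 3 / 4 * (x s * (1 - x s)) * twoStepGain η ε y s := by gcongr
    _ ≤ x (s + 2) - x s := htilt

lemma fst_le_fst_add_two (h : AlternatingOMWU η ε x y) (hη : 0 ≤ η) (hη' : η ≤ 1 / 12)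
    (hm : 36 * η ≤ m) (hs : 2 ≤ s) (hx : 1 / 2 + m ≤ x s) (hx_prev : 1 / 2 + m ≤ x (s - 1)) :
    x s ≤ x (s + 2) := by
  have hm0 : 0 ≤ m := by linarith
  have hvx : 0 ≤ x s * (1 - x s) := h.fst_var_nonneg (by lia)
  have hvy : 0 ≤ y (s + 1) * (1 - y (s + 1)) := h.swap.fst_var_nonneg (by lia)
  exact sub_nonneg.1 (le_trans (by positivity) (h.le_fst_add_two_sub hη hη' hm hs hx hx_prev))

lemma half_add_le_fst (h : AlternatingOMWU η ε x y) (hη : 0 ≤ η) (hη' : η ≤ 1 / 12)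
    (hm : 36 * η ≤ m) (hx0 : 1 / 2 + m + 9 / 2 * η ≤ x 0) (hs : 0 ≤ s) : 1 / 2 + m ≤ x s := by
  suffices hnat : ∀ n : ℕ, 1 / 2 + m ≤ x n by
    lift s to ℕ using hs
    exact hnat s
  intro n
  induction n using Nat.strong_induction_on with
  | _ n ih =>
    -- Two-step monotonicity only starts at round `2`; `9 / 2 * η` pays for the first three rounds.
    rcases le_or_gt n 3 with hn | hn
    · have hdrift := (abs_le.1 (h.abs_fst_add_sub_le hη hη' le_rfl n)).1
      have hn' : (n : ℝ) * (3 / 2 * η) ≤ 3 * (3 / 2 * η) := by gcongr; exact_mod_cast hn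
      rw [zero_add] at hdrift
      linarith
    · obtain ⟨k, rfl⟩ := Nat.exists_eq_add_of_le' hn
      have hx : 1 / 2 + m ≤ x (k + 2) := mod_cast ih (k + 2) (by lia)
      have hx_prev : 1 / 2 + m ≤ x (k + 1) := mod_cast ih (k + 1) (by lia)
      calc 1 / 2 + m ≤ x (k + 2) := hx
        _ ≤ x (k + 2 + 2) := h.fst_le_fst_add_two hη hη' hm (by lia) hx
            (by rwa [show (k : ℤ) + 2 - 1 = k + 1 by ring])
        _ = x ((k + (3 + 1) : ℕ) : ℤ) := by congr 1

section Window

variable {p : ℝ} {u : ℤ}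

lemma sqrt_le_of_initial (h : AlternatingOMWU η ε x y) (hpη : 16 * √η ≤ p)
    (hx0 : 1 / 2 + 2 * p ≤ x 0) : √η ≤ 1 / 64 := by
  linarith [(h.fst_mem 0 (by lia)).2]

lemma half_add_le_fst_of_initial (h : AlternatingOMWU η ε x y) (hη : 0 ≤ η) (hpη : 16 * √η ≤ p)
    (hx0 : 1 / 2 + 2 * p ≤ x 0) (hs : 0 ≤ s) : 1 / 2 + 3 / 2 * p ≤ x s := by
  have hsqrt := h.sqrt_le_of_initial hpη hx0
  have hsmall := le_mul_sqrt hη hsqrt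
  exact h.half_add_le_fst hη (by linarith) (by linarith) (by linarith) hs

lemma mul_sqrt_le_fst_var (h : AlternatingOMWU η ε x y) (hη : 0 ≤ η) (hpη : 16 * √η ≤ p)
    (hx0 : 1 / 2 + 2 * p ≤ x 0) (hs : 0 ≤ s) (hxs : x s ≤ 1 - √η) (hsu : s ≤ u)
    (hus : u ≤ s + 3) : 9 / 20 * √η ≤ x u * (1 - x u) := by
  obtain ⟨n, rfl⟩ := Int.le.dest hsu
  have hsqrt := h.sqrt_le_of_initial hpη hx0
  have hsmall := le_mul_sqrt hη hsqrt
  have hx : 1 / 2 ≤ x (s + n) := by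
    linarith [h.half_add_le_fst_of_initial hη hpη hx0 (s := s + n) (by lia), Real.sqrt_nonneg η]
  have hgap : 9 / 10 * √η ≤ 1 - x (s + n) := by
    have hdrift := (abs_le.1 (h.abs_fst_add_sub_le hη (by linarith) hs n)).2
    have hn : (n : ℝ) * (3 / 2 * η) ≤ 3 * (3 / 2 * η) := by
      gcongr
      exact_mod_cast (by lia : n ≤ 3)
    linarith
  calc 9 / 20 * √η = 1 / 2 * (9 / 10 * √η) := by ring
    _ ≤ x (s + n) * (1 - x (s + n)) := by gcongr

lemma fst_add_two_sub_bounds (h : AlternatingOMWU η ε x y) (hη : 0 ≤ η) (hpη : 16 * √η ≤ p)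
    (hx0 : 1 / 2 + 2 * p ≤ x 0) (hy0 : 1 / 2 + 2 * p ≤ y 0) (hs : 2 ≤ s) (hxs : x s ≤ 1 - √η)
    (hys : y s ≤ 1 - √η) (hsu : s ≤ u) (hus : u ≤ s + 2) :
    3 / 4 * p * η ^ 3 ≤ x (u + 2) - x u ∧ x (u + 2) - x u ≤ 12 * η ^ 2 := by
  have hp : 0 ≤ p := by linarith [Real.sqrt_nonneg η]
  have hsmall := le_mul_sqrt hη (h.sqrt_le_of_initial hpη hx0)
  have hη' : η ≤ 1 / 12 := by linarith [h.sqrt_le_of_initial hpη hx0]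
  have hvx : 9 / 20 * √η ≤ x u * (1 - x u) :=
    h.mul_sqrt_le_fst_var hη hpη hx0 (by lia) hxs hsu (by lia)
  have hvy : 9 / 20 * √η ≤ y (u + 1) * (1 - y (u + 1)) :=
    h.swap.mul_sqrt_le_fst_var hη hpη hy0 (by lia) hys (by lia) (by lia)
  have hvx_nonneg : 0 ≤ x u * (1 - x u) := h.fst_var_nonneg (by lia)
  constructor
  · calc 3 / 4 * p * η ^ 3
        ≤ 729 / 400 * p * η ^ 3 := by gcongr ?_ * p * η ^ 3; norm_num
      _ = 6 * (3 / 2 * p) * η ^ 2 * (9 / 20 * √η) * (9 / 20 * √η) := by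
          linear_combination (-729 / 400 * p * η ^ 2) * Real.mul_self_sqrt hη
      _ ≤ 6 * (3 / 2 * p) * η ^ 2 * (x u * (1 - x u)) * (y (u + 1) * (1 - y (u + 1))) := by gcongr
      _ ≤ x (u + 2) - x u :=
          h.le_fst_add_two_sub hη hη' (by linarith) (by lia)
            (h.half_add_le_fst_of_initial hη hpη hx0 (by lia))
            (h.half_add_le_fst_of_initial hη hpη hx0 (by lia))
  · have hstep := (abs_le.1 (h.abs_fst_sub_add_two_le hη hη' (s := u) (by lia))).1
    have hvar : x (u + 2) * (1 - x (u + 2)) ≤ 1 / 4 := by linarith [sq_nonneg (x (u + 2) - 1 / 2)]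
    linarith [mul_le_mul_of_nonneg_left hvar (sq_nonneg η), sq_nonneg η]

lemma sign_mul_snd_sub_succ_bounds (h : AlternatingOMWU η ε x y) (hη : 0 ≤ η)
    (hpη : 16 * √η ≤ p) (hx0 : 1 / 2 + 2 * p ≤ x 0) (hy0 : 1 / 2 + 2 * p ≤ y 0) (hs : 1 ≤ s)
    (hys : y s ≤ 1 - √η) (hsu : s ≤ u) (hus : u ≤ s + 2) :
    3 / 2 * p * η ^ ((3 : ℝ) / 2) ≤ ε u * (y u - y (u + 1)) ∧
      ε u * (y u - y (u + 1)) ≤ 3 * η := by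
  have hp : 0 ≤ p := by linarith [Real.sqrt_nonneg η]
  have hsmall := le_mul_sqrt hη (h.sqrt_le_of_initial hpη hx0)
  have hη' : η ≤ 1 / 12 := by linarith [h.sqrt_le_of_initial hpη hx0]
  have hvy : 9 / 20 * √η ≤ y (u + 1) * (1 - y (u + 1)) :=
    h.swap.mul_sqrt_le_fst_var hη hpη hy0 (by lia) hys (by lia) (by lia)
  constructor
  · calc 3 / 2 * p * η ^ ((3 : ℝ) / 2)
        = 3 / 2 * p * (η * √η) := by rw [rpow_three_halves hη]
      _ ≤ 243 / 80 * p * (η * √η) := by gcongr ?_ * p * (η * √η); norm_num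
      _ = 9 / 2 * (3 / 2 * p) * η * (9 / 20 * √η) := by ring
      _ ≤ 9 / 2 * (3 / 2 * p) * η * (y (u + 1) * (1 - y (u + 1))) := by gcongr
      _ ≤ ε u * (y u - y (u + 1)) :=
          h.le_sign_mul_snd_sub_succ hη hη' (by positivity) (by lia)
            (h.half_add_le_fst_of_initial hη hpη hx0 (by lia))
            (h.half_add_le_fst_of_initial hη hpη hx0 (by lia))
  · calc ε u * (y u - y (u + 1))
        ≤ |ε u * (y u - y (u + 1))| := le_abs_self _
      _ = |y (u + 1) - y u| := by rw [abs_mul, h.abs_sign, one_mul, abs_sub_comm]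
      _ ≤ 3 / 2 * η := h.swap.abs_fst_succ_sub_le hη hη' (by lia)
      _ ≤ 3 * η := by linarith

end Window

end AlternatingOMWU

lemma OMWU.alternatingOMWU {η : ℝ} {a b : ℤ → ℝ} (h : OMWU η a b) :
    AlternatingOMWU η (fun s => (-1) ^ s) (fun s => 1 - a s) (fun s => 1 - b s) := by
  obtain ⟨hmem, heven, hodd⟩ := h
  have ha s (hs : -1 ≤ s) : a s ∈ Set.Icc 0 1 := ⟨(hmem s hs).1.1.le, (hmem s hs).1.2.le⟩
  have hb s (hs : -1 ≤ s) : b s ∈ Set.Icc 0 1 := ⟨(hmem s hs).2.1.le, (hmem s hs).2.2.le⟩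
  refine ⟨fun s hs => Set.Icc.one_sub_mem (ha s hs), fun s hs => Set.Icc.one_sub_mem (hb s hs),
    fun s => ?_, fun s => ?_, fun s hs => ?_, fun s hs => ?_⟩
  · rcases Int.even_or_odd s with hs | hs <;> simp [hs.neg_one_zpow]
  · simp [zpow_add_one₀]
  · rcases Int.even_or_odd s with hs' | hs'
    · rw [(heven s hs hs').1, one_sub_div_eq_bernoulliTilt (ha s (by lia)), hs'.neg_one_zpow,
        optimisticGain]
      ring_nf
    · rw [(hodd s hs hs').1, one_sub_div_eq_bernoulliTilt (ha s (by lia)), hs'.neg_one_zpow,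
        optimisticGain]
      ring_nf
  · rcases Int.even_or_odd s with hs' | hs'
    · rw [(heven s hs hs').2, one_sub_div_eq_bernoulliTilt (hb s (by lia)), hs'.neg_one_zpow,
        optimisticGain]
      ring_nf
    · rw [(hodd s hs hs').2, one_sub_div_eq_bernoulliTilt (hb s (by lia)), hs'.neg_one_zpow,
        optimisticGain]
      ring_nf

theorem omwu_close_to_boundary_general {η : ℝ} (hη : 0 ≤ η) {a b : ℤ → ℝ} (h : OMWU η a b)
    {p : ℝ} (hpη : 16 * √η ≤ p) (ha0 : 1 / 2 + 2 * p ≤ 1 - a 0) (hb0 : 1 / 2 + 2 * p ≤ 1 - b 0)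
    {t : ℤ} (ht : 3 ≤ t) (hbd : 1 - a (t - 1) ≤ 1 - √η ∧ 1 - b (t - 1) ≤ 1 - √η) :
    (3 / 4 * p * η ^ 3 ≤ (1 - b (t + 1)) - (1 - b (t - 1)) ∧
      (1 - b (t + 1)) - (1 - b (t - 1)) ≤ 12 * η ^ 2) ∧
    (3 / 2 * p * η ^ ((3 : ℝ) / 2) ≤ (-1) ^ t * ((1 - b t) - (1 - b (t + 1))) ∧
      (-1) ^ t * ((1 - b t) - (1 - b (t + 1))) ≤ 3 * η) ∧
    (3 / 4 * p * η ^ 3 ≤ (1 - a (t + 2)) - (1 - a t) ∧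
      (1 - a (t + 2)) - (1 - a t) ≤ 12 * η ^ 2) ∧
    (3 / 4 * p * η ^ 3 ≤ (1 - a (t + 1)) - (1 - a (t - 1))) ∧
    (3 / 4 * p * η ^ 3 ≤ (1 - b (t + 2)) - (1 - b t)) ∧
    (3 / 2 * p * η ^ ((3 : ℝ) / 2) ≤ (-1) ^ t * ((1 - a (t + 1)) - (1 - a (t + 2))) ∧
      (-1) ^ t * ((1 - a (t + 1)) - (1 - a (t + 2))) ≤ 3 * η) := by
  have hA := h.alternatingOMWU
  have hB := hA.swap
  have hs : 2 ≤ t - 1 := by lia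
  have ht_two : t - 1 + 2 = t + 1 := by ring
  have ht_succ : t + 1 + 1 = t + 2 := by ring
  have hA_two u := hA.fst_add_two_sub_bounds hη hpη ha0 hb0 hs hbd.1 hbd.2 (u := u)
  have hB_two u := hB.fst_add_two_sub_bounds hη hpη hb0 ha0 hs hbd.2 hbd.1 (u := u)
  have hA_one := hB.sign_mul_snd_sub_succ_bounds hη hpη hb0 ha0 (by lia) hbd.1
    (u := t + 1) (by lia) (by lia)
  rw [Pi.neg_apply, zpow_add_one₀ (by norm_num), mul_neg_one, neg_neg, ht_succ] at hA_one
  exact ⟨ht_two ▸ hB_two (t - 1) le_rfl (by lia),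
    hA.sign_mul_snd_sub_succ_bounds hη hpη ha0 hb0 (by lia) hbd.2 (by lia) (by lia),
    hA_two t (by lia) (by lia), (ht_two ▸ hA_two (t - 1) le_rfl (by lia)).1,
    (hB_two t (by lia) (by lia)).1, hA_one⟩

/-- The key monotonicity estimates for OMWU away from the boundary
(Lemma on closeness to the boundary), writing `A s = 1 - a s` and `B s = 1 - b s`. -/
theorem omwu_close_to_boundary
    (η : ℝ) (hη : 0 < η) (a b : ℤ → ℝ) (h : OMWU η a b)
    (p : ℝ) (hp : 0 < p) (hp4 : p < 1/4) (hpη : 16 * Real.sqrt η ≤ p)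
    (ha0 : 1 - a 0 ≥ 1/2 + 2*p) (hb0 : 1 - b 0 ≥ 1/2 + 2*p)
    (t : ℤ) (ht : 4 ≤ t) (hte : Even t)
    (hbd : ∀ k : ℤ, -1 ≤ k → k < t →
      1 - a k ≤ 1 - Real.sqrt η ∧ 1 - b k ≤ 1 - Real.sqrt η) :
    ((3/4)*p*η^3 ≤ (1 - b (t+1)) - (1 - b (t-1)) ∧
      (1 - b (t+1)) - (1 - b (t-1)) ≤ 12*η^2) ∧
    ((3/2)*p*η^((3:ℝ)/2) ≤ (1 - b t) - (1 - b (t+1)) ∧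
      (1 - b t) - (1 - b (t+1)) ≤ 3*η) ∧
    ((3/4)*p*η^3 ≤ (1 - a (t+2)) - (1 - a t) ∧
      (1 - a (t+2)) - (1 - a t) ≤ 12*η^2) ∧
    ((3/4)*p*η^3 ≤ (1 - a (t+1)) - (1 - a (t-1))) ∧
    ((3/4)*p*η^3 ≤ (1 - b (t+2)) - (1 - b t)) ∧
    ((3/2)*p*η^((3:ℝ)/2) ≤ (1 - a (t+1)) - (1 - a (t+2)) ∧
      (1 - a (t+1)) - (1 - a (t+2)) ≤ 3*η) := by
  simpa only [hte.neg_one_zpow, one_mul] using omwu_close_to_boundary_general hη.le h hpη ha0 hb0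
    (by lia) (hbd (t - 1) (by lia) (by lia))
end

section
/- Let η > 0 and a ∈ (0,1), and let P = (0, 0, a, a·e^{−3η}/(a·e^{−3η} + 1 − a)) ∈ ℝ⁴. The map G₁∘G₂ is differentiable at P and its Fréchet derivative J satisfies: (i) J·w = w for the vector w = (0, 0, e^{−3η}·(a + (1−a)·e^{3η})², 1), so 1 is an eigenvalue of J with an eigenvector whose first two coordinates vanish; (ii) the set of eigenvalues of J is {0, 1, μ} where μ = exp(−2η·a·(1−a)·(e^{3η}−1)/(a + (1−a)·e^{3η})); (iii) 0 < μ < 1, so every eigenvalue of J has absolute value at most 1. -/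
/-!
In log-odds coordinates a multiplicative weights update is a translation. Hence updates with
opposite increments cancel, which makes `P` a fixed point and makes the two slopes met along its
orbit multiply to `1`. On the face `z 1 = 0` both Jacobians are block triangular with singular
diagonal blocks, and the characteristic polynomial of their product is
`X² (X - 1) (X - μ)`: the factor `1` is the product of the two slopes, and `μ` is the product of
the growth factors of the vanishing coordinate.
-/

/-- Two-step OMWU transition map for even starting time. -/
noncomputable def G1 (η : ℝ) (z : EuclideanSpace ℝ (Fin 4)) : EuclideanSpace ℝ (Fin 4) :=
  !₂[z 1,
    z 1 * Real.exp (3*η - 2*η * z 3 - η * z 2) /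
      (z 1 * Real.exp (3*η - 2*η * z 3 - η * z 2)
        + (1 - z 1) * Real.exp (2*η * z 3 + η * z 2)),
    z 3,
    z 3 * Real.exp (-(3*η) + 2*η * z 1 + η * z 0) /
      (z 3 * Real.exp (-(3*η) + 2*η * z 1 + η * z 0)
        + (1 - z 3) * Real.exp (-(2*η * z 1) - η * z 0))]

/-- Two-step OMWU transition map for odd starting time. -/
noncomputable def G2 (η : ℝ) (z : EuclideanSpace ℝ (Fin 4)) : EuclideanSpace ℝ (Fin 4) :=
  !₂[z 1,
    z 1 * Real.exp (-(3*η) + 2*η * z 3 + η * z 2) /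
      (z 1 * Real.exp (-(3*η) + 2*η * z 3 + η * z 2)
        + (1 - z 1) * Real.exp (-(2*η * z 3) - η * z 2)),
    z 3,
    z 3 * Real.exp (3*η - 2*η * z 1 - η * z 0) /
      (z 3 * Real.exp (3*η - 2*η * z 1 - η * z 0)
        + (1 - z 3) * Real.exp (2*η * z 1 + η * z 0))]

open Matrix Polynomial

/-- The normalizing constant of a two-action multiplicative weights update, where the first action
has probability `x` and its log-odds increase by `u`. -/
noncomputable def mwuNormalizer (x u : ℝ) : ℝ := x * Real.exp u + 1 - x

/-- The probability of the first action after a two-action multiplicative weights update which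
increases the log-odds of that action by `u`. -/
noncomputable def mwuUpdate (x u : ℝ) : ℝ := x * Real.exp u / mwuNormalizer x u

/-- The derivative of `mwuUpdate x u` with respect to the probability `x`. -/
noncomputable def mwuSlope (x u : ℝ) : ℝ := Real.exp u / mwuNormalizer x u ^ 2

lemma mwuNormalizer_pos {x : ℝ} (hx : x ∈ Set.Icc 0 1) (u : ℝ) : 0 < mwuNormalizer x u := by
  obtain rfl | hx0 := hx.1.eq_or_lt
  · simp [mwuNormalizer]
  · have := mul_pos hx0 (Real.exp_pos u)
    have := hx.2
    unfold mwuNormalizer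
    linarith

@[simp]
lemma mwuNormalizer_zero_left (u : ℝ) : mwuNormalizer 0 u = 1 := by
  simp [mwuNormalizer]

@[simp]
lemma mwuNormalizer_zero_right (x : ℝ) : mwuNormalizer x 0 = 1 := by
  simp [mwuNormalizer]

lemma mwuNormalizer_neg (x u : ℝ) :
    mwuNormalizer x (-u) = Real.exp (-u) * (x + (1 - x) * Real.exp u) := by
  rw [mwuNormalizer, Real.exp_neg]
  field_simp
  ring

lemma mul_exp_div_eq_mwuUpdate (x s t : ℝ) :
    x * Real.exp s / (x * Real.exp s + (1 - x) * Real.exp t) = mwuUpdate x (s - t) := by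
  rw [mwuUpdate, mwuNormalizer, Real.exp_sub, add_sub_assoc]
  field_simp

@[simp]
lemma mwuUpdate_zero_left (u : ℝ) : mwuUpdate 0 u = 0 := by
  simp [mwuUpdate]

@[simp]
lemma mwuUpdate_zero_right (x : ℝ) : mwuUpdate x 0 = x := by
  simp [mwuUpdate]

@[simp]
lemma mwuSlope_zero_right (x : ℝ) : mwuSlope x 0 = 1 := by
  simp [mwuSlope]

@[simp]
lemma mwuSlope_zero_left (u : ℝ) : mwuSlope 0 u = Real.exp u := by
  simp [mwuSlope]

lemma mwuNormalizer_mwuUpdate {x u : ℝ} (h : mwuNormalizer x u ≠ 0) (v : ℝ) :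
    mwuNormalizer (mwuUpdate x u) v = mwuNormalizer x (u + v) / mwuNormalizer x u := by
  rw [eq_div_iff h, mwuNormalizer, mwuUpdate, sub_mul, add_mul]
  field_simp
  simp only [mwuNormalizer, Real.exp_add]
  ring

lemma mwuUpdate_mwuUpdate {x u : ℝ} (h : mwuNormalizer x u ≠ 0) (v : ℝ) :
    mwuUpdate (mwuUpdate x u) v = mwuUpdate x (u + v) := by
  rw [mwuUpdate, mwuNormalizer_mwuUpdate h, mwuUpdate, mwuUpdate, Real.exp_add]
  field_simp

lemma mwuSlope_mwuUpdate_mul {x u : ℝ} (h : mwuNormalizer x u ≠ 0) (v : ℝ) :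
    mwuSlope (mwuUpdate x u) v * mwuSlope x u = mwuSlope x (u + v) := by
  rw [mwuSlope, mwuNormalizer_mwuUpdate h, mwuSlope, mwuSlope, Real.exp_add]
  field_simp

lemma mwuUpdate_neg_cancel {x u : ℝ} (h : mwuNormalizer x (-u) ≠ 0) :
    mwuUpdate (mwuUpdate x (-u)) u = x := by
  simp [mwuUpdate_mwuUpdate h]

lemma mwuSlope_neg_mul_cancel {x u : ℝ} (h : mwuNormalizer x (-u) ≠ 0) :
    mwuSlope (mwuUpdate x (-u)) u * mwuSlope x (-u) = 1 := by
  simp [mwuSlope_mwuUpdate_mul h]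

lemma sub_mwuUpdate_neg {x u : ℝ} (h : mwuNormalizer x (-u) ≠ 0) :
    x - mwuUpdate x (-u) = x * (1 - x) * (Real.exp u - 1) / (x + (1 - x) * Real.exp u) := by
  rw [mwuNormalizer_neg] at h
  rw [mwuUpdate, mwuNormalizer_neg, mul_comm x, mul_div_mul_left _ _ (Real.exp_ne_zero _)]
  have := right_ne_zero_of_mul h
  field_simp
  ring

lemma mwuSlope_mwuUpdate_neg {x u : ℝ} (h : mwuNormalizer x (-u) ≠ 0) :
    mwuSlope (mwuUpdate x (-u)) u = Real.exp (-u) * (x + (1 - x) * Real.exp u) ^ 2 := by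
  rw [eq_div_of_mul_eq (div_ne_zero (Real.exp_ne_zero _) (pow_ne_zero 2 h))
    (mwuSlope_neg_mul_cancel h), mwuNormalizer_neg]
  field_simp

lemma hasStrictFDerivAt_mwuUpdate {E : Type*} [NormedAddCommGroup E] [NormedSpace ℝ E]
    {x u : E → ℝ} {x' u' : E →L[ℝ] ℝ} {p : E}
    (hx : HasStrictFDerivAt x x' p) (hu : HasStrictFDerivAt u u' p)
    (h : mwuNormalizer (x p) (u p) ≠ 0) :
    HasStrictFDerivAt (fun z ↦ mwuUpdate (x z) (u z))
      (mwuSlope (x p) (u p) • x' +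
        (mwuUpdate (x p) (u p) * (1 - mwuUpdate (x p) (u p))) • u') p := by
  have hnum := hx.fun_mul hu.exp
  have hden : HasStrictFDerivAt (fun z ↦ mwuNormalizer (x z) (u z)) _ p :=
    (hnum.add_const 1).fun_sub hx
  have hquot := hnum.fun_mul ((hasStrictDerivAt_inv h).comp_hasStrictFDerivAt p hden)
  refine hquot.congr_fderiv ?_
  simp only [Function.comp_apply, mwuSlope, mwuUpdate, mwuNormalizer] at h ⊢
  match_scalars <;> field_simp <;> ring

/-- The log-odds increment of the first player under `G1 η` when the opponent's previous and current
probabilities are `x` and `y`. The second player's increment has the opposite sign, that is, it is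
`optimisticIncrement (-η) x y`. -/
def optimisticIncrement (η x y : ℝ) : ℝ := η * (3 - 2 * (2 * y + x))

lemma optimisticIncrement_zero (η : ℝ) : optimisticIncrement η 0 0 = 3 * η := by
  simp [optimisticIncrement, mul_comm]

lemma G1_eq_mwuUpdate (η : ℝ) (z : EuclideanSpace ℝ (Fin 4)) :
    G1 η z = !₂[z 1, mwuUpdate (z 1) (optimisticIncrement η (z 2) (z 3)),
      z 3, mwuUpdate (z 3) (optimisticIncrement (-η) (z 0) (z 1))] := by
  rw [G1, mul_exp_div_eq_mwuUpdate, mul_exp_div_eq_mwuUpdate]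
  simp only [optimisticIncrement]
  ring_nf

lemma G2_eq_G1_neg (η : ℝ) : G2 η = G1 (-η) := by
  funext z
  unfold G1 G2
  ring_nf

lemma G1_face (η x c d : ℝ) :
    G1 η !₂[x, 0, c, d] = !₂[0, 0, d, mwuUpdate d (optimisticIncrement (-η) x 0)] := by
  simp [G1_eq_mwuUpdate]

/-- The Jacobian matrix of `G1 η` at `z`. -/
noncomputable def G1Jacobian (η : ℝ) (z : EuclideanSpace ℝ (Fin 4)) : Matrix (Fin 4) (Fin 4) ℝ :=
  let u := optimisticIncrement η (z 2) (z 3)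
  let v := optimisticIncrement (-η) (z 0) (z 1)
  let x := mwuUpdate (z 1) u
  let y := mwuUpdate (z 3) v
  !![0, 1, 0, 0;
    0, mwuSlope (z 1) u, -2 * η * (x * (1 - x)), -4 * η * (x * (1 - x));
    0, 0, 0, 1;
    2 * η * (y * (1 - y)), 4 * η * (y * (1 - y)), 0, mwuSlope (z 3) v]

lemma hasStrictFDerivAt_optimisticIncrement {E : Type*} [NormedAddCommGroup E]
    [NormedSpace ℝ E] (η : ℝ) {x y : E → ℝ} {x' y' : E →L[ℝ] ℝ} {p : E}
    (hx : HasStrictFDerivAt x x' p) (hy : HasStrictFDerivAt y y' p) :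
    HasStrictFDerivAt (fun z ↦ optimisticIncrement η (x z) (y z))
      ((-2 * η) • ((2 : ℝ) • y' + x')) p := by
  refine (((((hy.const_mul 2).fun_add hx).const_mul 2).const_sub 3).const_mul η).congr_fderiv ?_
  module

lemma proj_comp_toEuclideanCLM {n : Type*} [Fintype n] [DecidableEq n] (A : Matrix n n ℝ) (i : n) :
    EuclideanSpace.proj i ∘L toEuclideanCLM (n := n) (𝕜 := ℝ) A =
      ∑ j, A i j • EuclideanSpace.proj j := by
  ext v
  simp [mulVec, dotProduct]

lemma hasStrictFDerivAt_G1 {η : ℝ} {z : EuclideanSpace ℝ (Fin 4)}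
    (h₁ : mwuNormalizer (z 1) (optimisticIncrement η (z 2) (z 3)) ≠ 0)
    (h₂ : mwuNormalizer (z 3) (optimisticIncrement (-η) (z 0) (z 1)) ≠ 0) :
    HasStrictFDerivAt (G1 η) (toEuclideanCLM (n := Fin 4) (𝕜 := ℝ) (G1Jacobian η z)) z := by
  have hcoord (i : Fin 4) : HasStrictFDerivAt (fun z : EuclideanSpace ℝ (Fin 4) ↦ z i)
      (EuclideanSpace.proj i : EuclideanSpace ℝ (Fin 4) →L[ℝ] ℝ) z :=
    (EuclideanSpace.proj i : EuclideanSpace ℝ (Fin 4) →L[ℝ] ℝ).hasStrictFDerivAt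
  have hfirst := hasStrictFDerivAt_mwuUpdate (hcoord 1)
    (hasStrictFDerivAt_optimisticIncrement η (hcoord 2) (hcoord 3)) h₁
  have hsecond := hasStrictFDerivAt_mwuUpdate (hcoord 3)
    (hasStrictFDerivAt_optimisticIncrement (-η) (hcoord 0) (hcoord 1)) h₂
  rw [funext (G1_eq_mwuUpdate η), hasStrictFDerivAt_euclidean]
  intro i
  fin_cases i
  · refine (hcoord 1).congr_fderiv ?_
    simp [proj_comp_toEuclideanCLM, Fin.sum_univ_four, G1Jacobian]
  · refine hfirst.congr_fderiv ?_
    simp only [proj_comp_toEuclideanCLM, Fin.sum_univ_four, G1Jacobian, of_apply, Fin.mk_one,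
      Fin.isValue, cons_val', cons_val]
    module
  · refine (hcoord 3).congr_fderiv ?_
    simp [proj_comp_toEuclideanCLM, Fin.sum_univ_four, G1Jacobian]
  · refine hsecond.congr_fderiv ?_
    simp only [proj_comp_toEuclideanCLM, Fin.sum_univ_four, G1Jacobian, of_apply, Fin.reduceFinMk,
      Fin.isValue, cons_val', cons_val]
    module

/-- The shape of `G1Jacobian η z` on the face `z 1 = 0`. -/
def faceMatrix {R : Type*} [Zero R] [One R] (e p q s : R) : Matrix (Fin 4) (Fin 4) R :=
  !![0, 1, 0, 0;
    0, e, 0, 0;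
    0, 0, 0, 1;
    p, q, 0, s]

lemma charpoly_faceMatrix_mul {R : Type*} [CommRing R] (e p q s e' p' q' s' : R) :
    (faceMatrix e p q s * faceMatrix e' p' q' s').charpoly =
      X ^ 2 * (X - C (s * s')) * (X - C (e * e')) := by
  have hblocks : faceMatrix e p q s * faceMatrix e' p' q' s' =
      reindex (finSumFinEquiv (m := 2) (n := 2)) finSumFinEquiv
        (fromBlocks !![0, e'; 0, e * e'] 0 !![p', q'; s * p', p + q * e' + s * q']
          !![0, s'; 0, s * s']) := by
    ext i j
    fin_cases i <;> fin_cases j <;>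
      simp [faceMatrix, finSumFinEquiv, Fin.addCases, add_assoc]
  have hblock (b d : R) : (!![0, b; 0, d] : Matrix (Fin 2) (Fin 2) R).charpoly = X * (X - C d) := by
    simp [charpoly, charmatrix, det_fin_two]
  rw [hblocks, charpoly_reindex, charpoly_fromBlocks_zero₁₂, hblock, hblock]
  ring

lemma faceMatrix_mul_mulVec {R : Type*} [CommRing R] (e p q s e' p' q' s' : R) :
    (faceMatrix e p q s * faceMatrix e' p' q' s') *ᵥ ![0, 0, s', 1] = ![0, 0, s', s * s'] := by
  ext i
  fin_cases i <;> simp [faceMatrix]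

lemma G1Jacobian_face (η x c d : ℝ) :
    let v := optimisticIncrement (-η) x 0
    let y := mwuUpdate d v
    G1Jacobian η !₂[x, 0, c, d] =
      faceMatrix (Real.exp (optimisticIncrement η c d)) (2 * η * (y * (1 - y)))
        (4 * η * (y * (1 - y))) (mwuSlope d v) := by
  simp [G1Jacobian, faceMatrix]

lemma hasEigenvalue_toEuclideanCLM_iff {n : Type*} [Fintype n] [DecidableEq n]
    (A : Matrix n n ℝ) (x : ℝ) :
    Module.End.HasEigenvalue (toEuclideanCLM (n := n) (𝕜 := ℝ) A).toLinearMap x ↔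
      A.charpoly.IsRoot x := by
  rw [coe_toEuclideanCLM_eq_toEuclideanLin, Module.End.hasEigenvalue_iff_mem_spectrum,
    spectrum_toLpLin, mem_spectrum_iff_isRoot_charpoly]

/-- The fixed point `P` of `G1 η ∘ G2 η`. -/
noncomputable def boundaryPoint (η a : ℝ) : EuclideanSpace ℝ (Fin 4) :=
  !₂[0, 0, a, mwuUpdate a (-(3 * η))]

/-- The vector `w` fixed by the Jacobian of `G1 η ∘ G2 η` at `boundaryPoint η a`. -/
noncomputable def boundaryEigenvector (η a : ℝ) : EuclideanSpace ℝ (Fin 4) :=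
  !₂[0, 0, Real.exp (-(3 * η)) * (a + (1 - a) * Real.exp (3 * η)) ^ 2, 1]

/-- The eigenvalue `μ` of the Jacobian of `G1 η ∘ G2 η` at `boundaryPoint η a`. -/
noncomputable def boundaryMultiplier (η a : ℝ) : ℝ :=
  Real.exp (-(2 * η * a * (1 - a) * (Real.exp (3 * η) - 1) / (a + (1 - a) * Real.exp (3 * η))))

/-- The Jacobian matrix of `G1 η ∘ G2 η` at `boundaryPoint η a`, as a product by the chain rule. -/
noncomputable def boundaryJacobian (η a : ℝ) : Matrix (Fin 4) (Fin 4) ℝ :=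
  G1Jacobian η !₂[0, 0, mwuUpdate a (-(3 * η)), a] * G1Jacobian (-η) (boundaryPoint η a)

section

variable {η a : ℝ}

lemma G2_boundaryPoint (h : mwuNormalizer a (-(3 * η)) ≠ 0) :
    G2 η (boundaryPoint η a) = !₂[0, 0, mwuUpdate a (-(3 * η)), a] := by
  rw [G2_eq_G1_neg, boundaryPoint, G1_face, neg_neg, optimisticIncrement_zero,
    mwuUpdate_neg_cancel h]

lemma hasStrictFDerivAt_G1_comp_G2_boundaryPoint (h : mwuNormalizer a (-(3 * η)) ≠ 0) :
    HasStrictFDerivAt (G1 η ∘ G2 η)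
      (toEuclideanCLM (n := Fin 4) (𝕜 := ℝ) (boundaryJacobian η a)) (boundaryPoint η a) := by
  have hinner : HasStrictFDerivAt (G2 η)
      (toEuclideanCLM (n := Fin 4) (𝕜 := ℝ) (G1Jacobian (-η) (boundaryPoint η a)))
      (boundaryPoint η a) := by
    rw [G2_eq_G1_neg]
    apply hasStrictFDerivAt_G1
    · simp [boundaryPoint]
    · simp [boundaryPoint, optimisticIncrement_zero, mwuNormalizer_mwuUpdate h, h]
  have houter : HasStrictFDerivAt (G1 η)
      (toEuclideanCLM (n := Fin 4) (𝕜 := ℝ) (G1Jacobian η !₂[0, 0, mwuUpdate a (-(3 * η)), a]))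
      (G2 η (boundaryPoint η a)) := by
    rw [G2_boundaryPoint h]
    apply hasStrictFDerivAt_G1
    · simp
    · simpa [optimisticIncrement_zero] using h
  rw [boundaryJacobian, map_mul]
  exact houter.comp _ hinner

lemma exp_optimisticIncrement_mul_eq_boundaryMultiplier (h : mwuNormalizer a (-(3 * η)) ≠ 0) :
    Real.exp (optimisticIncrement η (mwuUpdate a (-(3 * η))) a) *
      Real.exp (optimisticIncrement (-η) a (mwuUpdate a (-(3 * η)))) = boundaryMultiplier η a := by
  rw [← Real.exp_add, boundaryMultiplier]
  congr 1
  calc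
    _ = -(2 * η * (a - mwuUpdate a (-(3 * η)))) := by
      simp only [optimisticIncrement]
      ring
    _ = _ := by
      rw [sub_mwuUpdate_neg h]
      ring

lemma charpoly_boundaryJacobian (h : mwuNormalizer a (-(3 * η)) ≠ 0) :
    (boundaryJacobian η a).charpoly = X ^ 2 * (X - C 1) * (X - C (boundaryMultiplier η a)) := by
  rw [boundaryJacobian, boundaryPoint, G1Jacobian_face, G1Jacobian_face, charpoly_faceMatrix_mul,
    exp_optimisticIncrement_mul_eq_boundaryMultiplier h, neg_neg, optimisticIncrement_zero,
    optimisticIncrement_zero, mul_neg, mul_comm (mwuSlope a _), mwuSlope_neg_mul_cancel h]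

lemma boundaryJacobian_apply_boundaryEigenvector (h : mwuNormalizer a (-(3 * η)) ≠ 0) :
    toEuclideanCLM (n := Fin 4) (𝕜 := ℝ) (boundaryJacobian η a) (boundaryEigenvector η a) =
      boundaryEigenvector η a := by
  rw [boundaryEigenvector, ← mwuSlope_mwuUpdate_neg h, toEuclideanCLM_toLp, boundaryJacobian,
    boundaryPoint, G1Jacobian_face, G1Jacobian_face, neg_neg, optimisticIncrement_zero,
    optimisticIncrement_zero, mul_neg, faceMatrix_mul_mulVec, mul_comm (mwuSlope a _),
    mwuSlope_neg_mul_cancel h]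

lemma hasEigenvalue_boundaryJacobian_iff (h : mwuNormalizer a (-(3 * η)) ≠ 0) (x : ℝ) :
    Module.End.HasEigenvalue
        (toEuclideanCLM (n := Fin 4) (𝕜 := ℝ) (boundaryJacobian η a)).toLinearMap x ↔
      x ∈ ({0, 1, boundaryMultiplier η a} : Set ℝ) := by
  rw [hasEigenvalue_toEuclideanCLM_iff, charpoly_boundaryJacobian h]
  simp [sub_eq_zero, or_assoc]

lemma boundaryMultiplier_pos (η a : ℝ) : 0 < boundaryMultiplier η a := Real.exp_pos _

lemma boundaryMultiplier_lt_one (hη : η ≠ 0) (ha : a ∈ Set.Ioo 0 1) :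
    boundaryMultiplier η a < 1 := by
  have ha₀ : 0 < a := ha.1
  have ha₁ : 0 < 1 - a := sub_pos.2 ha.2
  have hgrowth : 0 < η * (Real.exp (3 * η) - 1) := by
    obtain hneg | hpos := hη.lt_or_gt
    · exact mul_pos_of_neg_of_neg hneg (sub_neg.2 (Real.exp_lt_one_iff.2 (by linarith)))
    · exact mul_pos hpos (sub_pos.2 (Real.one_lt_exp_iff.2 (by linarith)))
  rw [boundaryMultiplier, Real.exp_lt_one_iff, neg_lt_zero]
  calc
    0 < η * (Real.exp (3 * η) - 1) * (2 * a * (1 - a) / (a + (1 - a) * Real.exp (3 * η))) := by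
      positivity
    _ = _ := by ring

end

/-- Negative `η` covers `G2 ∘ G1`, because `G2 η = G1 (-η)`. -/
theorem omwu_boundary_jacobian_spectrum_general {η a : ℝ} (hη : η ≠ 0) (ha : a ∈ Set.Ioo 0 1) :
    let J := fderiv ℝ (G1 η ∘ G2 η) (boundaryPoint η a)
    DifferentiableAt ℝ (G1 η ∘ G2 η) (boundaryPoint η a) ∧
    J (boundaryEigenvector η a) = boundaryEigenvector η a ∧
    (∀ x : ℝ, Module.End.HasEigenvalue J.toLinearMap x ↔
      x ∈ ({0, 1, boundaryMultiplier η a} : Set ℝ)) ∧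
    (0 < boundaryMultiplier η a ∧ boundaryMultiplier η a < 1) ∧
    ∀ x : ℝ, Module.End.HasEigenvalue J.toLinearMap x → |x| ≤ 1 := by
  have h : mwuNormalizer a (-(3 * η)) ≠ 0 := (mwuNormalizer_pos (Set.Ioo_subset_Icc_self ha) _).ne'
  have hJ := (hasStrictFDerivAt_G1_comp_G2_boundaryPoint h).hasFDerivAt
  have hpos := boundaryMultiplier_pos η a
  have hlt := boundaryMultiplier_lt_one hη ha
  rw [hJ.fderiv]
  refine ⟨hJ.differentiableAt, boundaryJacobian_apply_boundaryEigenvector h,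
    hasEigenvalue_boundaryJacobian_iff h, ⟨hpos, hlt⟩, fun x hx ↦ ?_⟩
  obtain rfl | rfl | rfl := (hasEigenvalue_boundaryJacobian_iff h x).1 hx
  · simp
  · simp
  · rw [abs_of_pos hpos]
    exact hlt.le

/-- Spectral properties of the Jacobian of `G₁∘G₂` at the boundary fixed point
`P = (0,0,a, a·e^{−3η}/(a·e^{−3η}+1−a))` for `a ∈ (0,1)`: it fixes the vector
`w = (0,0, e^{−3η}(a+(1−a)e^{3η})², 1)`, its eigenvalues are exactly `{0, 1, μ}`
with `μ = exp(−2ηa(1−a)(e^{3η}−1)/(a+(1−a)e^{3η}))`, `0 < μ < 1`, and every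
eigenvalue has absolute value at most `1`. -/
theorem omwu_boundary_jacobian_spectrum (η : ℝ) (hη : 0 < η) (a : ℝ)
    (ha : a ∈ Set.Ioo (0:ℝ) 1) :
    DifferentiableAt ℝ (G1 η ∘ G2 η)
      (!₂[0, 0, a, a * Real.exp (-(3*η)) / (a * Real.exp (-(3*η)) + 1 - a)] :
        EuclideanSpace ℝ (Fin 4)) ∧
    fderiv ℝ (G1 η ∘ G2 η)
      (!₂[0, 0, a, a * Real.exp (-(3*η)) / (a * Real.exp (-(3*η)) + 1 - a)] :
        EuclideanSpace ℝ (Fin 4))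
      (!₂[0, 0, Real.exp (-(3*η)) * (a + (1-a) * Real.exp (3*η))^2, 1] :
        EuclideanSpace ℝ (Fin 4)) =
      (!₂[0, 0, Real.exp (-(3*η)) * (a + (1-a) * Real.exp (3*η))^2, 1] :
        EuclideanSpace ℝ (Fin 4)) ∧
    (∀ x : ℝ,
      Module.End.HasEigenvalue
        (fderiv ℝ (G1 η ∘ G2 η)
          (!₂[0, 0, a, a * Real.exp (-(3*η)) / (a * Real.exp (-(3*η)) + 1 - a)] :
            EuclideanSpace ℝ (Fin 4))).toLinearMap x ↔
      x ∈ ({0, 1,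
        Real.exp (-(2*η*a*(1-a)*(Real.exp (3*η) - 1) / (a + (1-a)*Real.exp (3*η))))} :
          Set ℝ)) ∧
    (0 < Real.exp (-(2*η*a*(1-a)*(Real.exp (3*η) - 1) / (a + (1-a)*Real.exp (3*η)))) ∧
      Real.exp (-(2*η*a*(1-a)*(Real.exp (3*η) - 1) / (a + (1-a)*Real.exp (3*η)))) < 1) ∧
    (∀ x : ℝ,
      Module.End.HasEigenvalue
        (fderiv ℝ (G1 η ∘ G2 η)
          (!₂[0, 0, a, a * Real.exp (-(3*η)) / (a * Real.exp (-(3*η)) + 1 - a)] :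
            EuclideanSpace ℝ (Fin 4))).toLinearMap x → |x| ≤ 1) :=
  omwu_boundary_jacobian_spectrum_general hη.ne' ha
end
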